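/- arXiv:1311.0234 — 5 statements merged into one kernel-verified Lean document; each statement's English description precedes it below -/
import Mathlib

section
/- Let k be a natural number, D a nonzero real number, and c_1, …, c_{k+1} real numbers. Then there exists a real polynomial P of degree exactly k+1 (one may take its leading coefficient to be (−1)^k · D/(2·(k+1)!)) such that for all real numbers y and X_1, …, X_k satisfying the trace system with these data, P(y) = 0. -/
/-- The trace system of the paper (proof of Theorem 4): for every `n ∈ {1, …, k+1}`,
`(D/2)·y^n + Σ_{i=1}^{k} n(n−1)⋯(n−i+1) · y^{n−i} · X_i = c_n`, where the descending
factorial `n(n−1)⋯(n−i+1)` is `Nat.descFactorial n i` (which vanishes for `i > n`). -/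
def TraceSystem (k : ℕ) (D : ℝ) (c : ℕ → ℝ) (y : ℝ) (X : ℕ → ℝ) : Prop :=
  ∀ n ∈ Finset.Icc 1 (k + 1),
    D / 2 * y ^ n +
      ∑ i ∈ Finset.Icc 1 k, (Nat.descFactorial n i : ℝ) * y ^ (n - i) * X i = c n

/-!
Put `Φ p = (D/2) p(y) + ∑ i ∈ {1, …, k}, p⁽ⁱ⁾(y) X_i`, a linear functional on polynomials. The trace
system says that `Φ (Tⁿ) = c_n` for `1 ≤ n ≤ k + 1`, and `Φ 1 = D/2`. Since `(T - y)ᵏ⁺¹` vanishes at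
`y` together with its first `k` derivatives, `Φ` kills it. Expanding by the binomial theorem gives
`∑ m, (-1)ᵐ (k+1 choose m) c_{k+1-m} yᵐ = 0` with `c_0 = D/2`, a polynomial equation for `y` whose
top coefficient is `(-1)ᵏ⁺¹ D/2`; it remains to divide by `-(k+1)!`.
-/

section

open Polynomial Finset
open scoped Nat

variable {R : Type*} [CommRing R]

/-- The polynomial whose value at `y` is the `N`-th moment about `y`, `L ((X - y) ^ N)`, of a linear
functional `L` with moments `L (X ^ n) = c n`; see `eval_centralMomentPoly`. -/
noncomputable def centralMomentPoly (N : ℕ) (c : ℕ → R) : R[X] :=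
  ∑ m ∈ range (N + 1), monomial m ((-1) ^ m * N.choose m * c (N - m))

lemma eval_centralMomentPoly {N : ℕ} {c : ℕ → R} {L : R[X] →ₗ[R] R}
    (hL : ∀ n ≤ N, L (X ^ n) = c n) (y : R) :
    (centralMomentPoly N c).eval y = L ((X - C y) ^ N) := by
  have binomial : (X - C y) ^ N =
      ∑ m ∈ range (N + 1), ((-y) ^ m * N.choose m) • (X ^ (N - m) : R[X]) := by
    rw [sub_eq_neg_add, add_pow]
    refine sum_congr rfl fun m _ => ?_
    simp only [smul_eq_C_mul, C_mul, C_pow, C_neg, map_natCast]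
    ring
  rw [binomial, map_sum, centralMomentPoly, eval_finsetSum]
  refine sum_congr rfl fun m _ => ?_
  rw [eval_monomial, map_smul, hL _ (N.sub_le m), smul_eq_mul, neg_pow y]
  ring

lemma natDegree_centralMomentPoly_le (N : ℕ) (c : ℕ → R) :
    (centralMomentPoly N c).natDegree ≤ N :=
  natDegree_sum_le_of_forall_le _ _ fun _ hm =>
    (natDegree_monomial_le _).trans (mem_range_succ_iff.1 hm)

lemma coeff_centralMomentPoly_self (N : ℕ) (c : ℕ → R) :
    (centralMomentPoly N c).coeff N = (-1) ^ N * c 0 := by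
  simp [centralMomentPoly, coeff_monomial]

lemma natDegree_centralMomentPoly {c : ℕ → R} (hc : c 0 ≠ 0) (N : ℕ) :
    (centralMomentPoly N c).natDegree = N := by
  refine natDegree_eq_of_le_of_coeff_ne_zero (natDegree_centralMomentPoly_le N c) ?_
  rw [coeff_centralMomentPoly_self]
  exact (isUnit_one.neg.pow N).mul_right_eq_zero.not.2 hc

lemma leadingCoeff_centralMomentPoly {c : ℕ → R} (hc : c 0 ≠ 0) (N : ℕ) :
    (centralMomentPoly N c).leadingCoeff = (-1) ^ N * c 0 := by
  rw [leadingCoeff, natDegree_centralMomentPoly hc, coeff_centralMomentPoly_self]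

/-- The functional `p ↦ a p(y) + ∑ i ∈ {1, …, k}, p⁽ⁱ⁾(y) x_i`, whose values at `X, …, X ^ (k + 1)`
are the left-hand sides of the trace system when `a = D / 2`. -/
noncomputable def traceFunctional (k : ℕ) (a y : R) (x : ℕ → R) : R[X] →ₗ[R] R :=
  a • leval y + ∑ i ∈ Icc 1 k, x i • (leval y ∘ₗ derivative ^ i)

lemma traceFunctional_apply (k : ℕ) (a y : R) (x : ℕ → R) (p : R[X]) :
    traceFunctional k a y x p =
      a * p.eval y + ∑ i ∈ Icc 1 k, (derivative^[i] p).eval y * x i := by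
  simp [traceFunctional, Module.End.pow_apply, mul_comm]

lemma traceFunctional_X_pow (k : ℕ) (a y : R) (x : ℕ → R) (n : ℕ) :
    traceFunctional k a y x (X ^ n) =
      a * y ^ n + ∑ i ∈ Icc 1 k, (n.descFactorial i : R) * y ^ (n - i) * x i := by
  simp [traceFunctional_apply, iterate_derivative_X_pow_eq_natCast_mul]

lemma traceFunctional_one (k : ℕ) (a y : R) (x : ℕ → R) :
    traceFunctional k a y x 1 = a := by
  rw [traceFunctional_apply, sum_eq_zero fun i hi => by
    rw [iterate_derivative_one (mem_Icc.1 hi).1, eval_zero, zero_mul]]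
  simp

lemma traceFunctional_X_sub_C_pow {k N : ℕ} (hkN : k < N) (a y : R) (x : ℕ → R) :
    traceFunctional k a y x ((X - C y) ^ N) = 0 := by
  have eval_iterate_derivative (i : ℕ) (hi : i < N) :
      (derivative^[i] ((X - C y) ^ N)).eval y = 0 := by
    simp [iterate_derivative_X_sub_pow, zero_pow (Nat.sub_ne_zero_of_lt hi)]
  rw [traceFunctional_apply, sum_eq_zero fun i hi => by
    rw [eval_iterate_derivative i ((mem_Icc.1 hi).2.trans_lt hkN), zero_mul]]
  simp [Nat.ne_zero_of_lt hkN]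

lemma eval_centralMomentPoly_eq_zero_of_trace_system {k : ℕ} {a y : R} {c x : ℕ → R}
    (h : ∀ n ∈ Icc 1 (k + 1),
      a * y ^ n + ∑ i ∈ Icc 1 k, (n.descFactorial i : R) * y ^ (n - i) * x i = c n) :
    (centralMomentPoly (k + 1) (Function.update c 0 a)).eval y = 0 := by
  have moments : ∀ n ≤ k + 1,
      traceFunctional k a y x (X ^ n) = Function.update c 0 a n := by
    rintro (_ | n) hn
    · rw [pow_zero, traceFunctional_one, Function.update_self]
    · rw [traceFunctional_X_pow, h _ (mem_Icc.2 ⟨n.succ_pos, hn⟩),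
        Function.update_of_ne n.succ_ne_zero]
  rw [eval_centralMomentPoly moments, traceFunctional_X_sub_C_pow k.lt_succ_self]

theorem trace_system_poly_general {K : Type*} [Field K] (k : ℕ)
    (hk : 2 * ((k + 1)! : K) ≠ 0) (D : K) (hD : D ≠ 0) (c : ℕ → K) :
    ∃ P : K[X],
      P.degree = (k + 1 : ℕ) ∧
      P.leadingCoeff = (-1) ^ k * D / (2 * ((k + 1)! : K)) ∧
      ∀ (y : K) (x : ℕ → K),
        (∀ n ∈ Icc 1 (k + 1),
          D / 2 * y ^ n + ∑ i ∈ Icc 1 k, (n.descFactorial i : K) * y ^ (n - i) * x i = c n) →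
        P.eval y = 0 := by
  obtain ⟨h_two, h_factorial⟩ := mul_ne_zero_iff.1 hk
  let Q : K[X] := centralMomentPoly (k + 1) (Function.update c 0 (D / 2))
  have moment_zero_ne_zero : Function.update c 0 (D / 2) 0 ≠ 0 := by
    rw [Function.update_self]
    exact div_ne_zero hD h_two
  have natDegree_Q : Q.natDegree = k + 1 := natDegree_centralMomentPoly moment_zero_ne_zero _
  have leadingCoeff_Q : Q.leadingCoeff = (-1) ^ (k + 1) * (D / 2) := by
    rw [leadingCoeff_centralMomentPoly moment_zero_ne_zero, Function.update_self]
  have scalar_ne_zero : -((k + 1)! : K)⁻¹ ≠ 0 := neg_ne_zero.2 (inv_ne_zero h_factorial)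
  refine ⟨C (-((k + 1)! : K)⁻¹) * Q, ?_, ?_, fun y x h => ?_⟩
  · rw [degree_C_mul scalar_ne_zero, degree_eq_iff_natDegree_eq_of_pos k.succ_pos, natDegree_Q]
  · rw [leadingCoeff_mul, leadingCoeff_C, leadingCoeff_Q]
    field_simp
    ring
  · rw [eval_mul, eval_centralMomentPoly_eq_zero_of_trace_system h, mul_zero]

end

/-- There is a real polynomial `P` of degree exactly `k+1`, with leading coefficient
`(−1)^k · D / (2·(k+1)!)`, vanishing at every `y` which (together with some `X_1,…,X_k`)
satisfies the trace system with constants `c_1,…,c_{k+1}`. -/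
theorem trace_system_poly (k : ℕ) (D : ℝ) (hD : D ≠ 0) (c : ℕ → ℝ) :
    ∃ P : Polynomial ℝ,
      P.degree = (k + 1 : ℕ) ∧
      P.leadingCoeff = (-1) ^ k * D / (2 * (Nat.factorial (k + 1) : ℝ)) ∧
      ∀ (y : ℝ) (X : ℕ → ℝ), TraceSystem k D c y X → P.eval y = 0 :=
  trace_system_poly_general k (by positivity) D hD c
end

section
/- Let M be a preconnected topological space, k a natural number, D a nonzero real number, and c_1, …, c_{k+1} real constants. Let I : M → ℝ be a continuous function and X_1, …, X_k : M → ℝ arbitrary functions such that at every point p ∈ M the values I(p), X_1(p), …, X_k(p) satisfy the trace system with constants c_1, …, c_{k+1}. Then I is a constant function on M, and moreover each X_i is a constant function on M. -/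
/-!
Set `z 0 = D / 2` and `z i = i! * X i` for `1 ≤ i ≤ k`, `z i = 0` for `i > k`, and read `c 0` as
`D / 2`. Since `n.descFactorial i = n.choose i * i!`, the trace system says that `c` is, up to
index `k + 1`, the binomial transform of `z` with parameter `y`: umbrally,
`c n = (z + y) ^ n`. Such transforms compose additively in the parameter, so `z m = (c - y) ^ m`.
For `m = k + 1` this is a polynomial equation for `y` with leading coefficient `± D / 2 ≠ 0`, which
leaves finitely many values of `y`, and a continuous function on a preconnected space with
finitely many values is constant. For `1 ≤ m ≤ k` it expresses `X m` through `y` and the constants.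
-/

section Appell

open Polynomial

variable {R : Type*}

section CommSemiring

variable [CommSemiring R]

/-- The umbral functional of a sequence `a`: the linear functional on polynomials sending `X ^ n`
to `a n`. It turns identities between powers of `X + C y` into identities between Appell
polynomials. -/
noncomputable def umbral (a : ℕ → R) : R[X] →ₗ[R] R :=
  lsum fun n => LinearMap.toSpanSingleton R R (a n)

theorem umbral_X_pow (a : ℕ → R) (n : ℕ) : umbral a (X ^ n) = a n := by
  simp [umbral, lsum_apply, ← monomial_one_right_eq_X_pow, sum_monomial_index]

/-- The `n`-th Appell polynomial of a sequence `a`, the umbral expansion of `(a + X) ^ n`; its value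
at `y` is the `n`-th term of the binomial transform of `a` with parameter `y`. -/
noncomputable def appell (a : ℕ → R) (n : ℕ) : R[X] :=
  ∑ i ∈ Finset.range (n + 1), C (n.choose i * a i) * X ^ (n - i)

theorem appell_zero (a : ℕ → R) : appell a 0 = C (a 0) := by
  simp [appell]

theorem appell_congr {a b : ℕ → R} {n : ℕ} (h : ∀ i ≤ n, a i = b i) : appell a n = appell b n :=
  Finset.sum_congr rfl fun i hi => by rw [h i (Finset.mem_range_succ_iff.mp hi)]

theorem coeff_appell_self (a : ℕ → R) (n : ℕ) : (appell a n).coeff n = a 0 := by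
  simp only [appell, finsetSum_coeff, coeff_C_mul_X_pow]
  rw [Finset.sum_eq_single_of_mem 0 (by simp)]
  · simp
  · intro i hi hi0
    rw [Finset.mem_range] at hi
    exact if_neg (by omega)

theorem eval_appell (a : ℕ → R) (n : ℕ) (y : R) :
    (appell a n).eval y = ∑ i ∈ Finset.range (n + 1), n.choose i * a i * y ^ (n - i) := by
  simp only [appell, eval_finsetSum, eval_C_mul, eval_X_pow]

theorem umbral_X_add_C_pow (a : ℕ → R) (n : ℕ) (y : R) :
    umbral a ((X + C y) ^ n) = (appell a n).eval y := by
  rw [eval_appell, add_pow, map_sum]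
  refine Finset.sum_congr rfl fun i _ => ?_
  have hterm :
      X ^ i * C y ^ (n - i) * (n.choose i : R[X]) = (n.choose i * y ^ (n - i)) • X ^ i := by
    simp only [smul_eq_C_mul, C_mul, C_pow, map_natCast]
    ring
  rw [hterm, map_smul, umbral_X_pow, smul_eq_mul, mul_right_comm]

theorem umbral_taylor (a : ℕ → R) (x : R) (p : R[X]) :
    umbral a (taylor x p) = umbral (fun n => (appell a n).eval x) p := by
  induction p using Polynomial.induction_on' with
  | add p q hp hq => simp only [map_add, hp, hq]
  | monomial n r =>
    rw [← mul_one r, ← smul_eq_mul, ← smul_monomial, monomial_one_right_eq_X_pow, map_smul,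
      map_smul, map_smul, taylor_X_pow, umbral_X_add_C_pow, umbral_X_pow]

theorem eval_appell_eval_appell (a : ℕ → R) (n : ℕ) (x y : R) :
    (appell (fun m => (appell a m).eval x) n).eval y = (appell a n).eval (x + y) := by
  rw [← umbral_X_add_C_pow, ← umbral_taylor, ← umbral_X_add_C_pow, taylor_pow, map_add, taylor_X,
    taylor_C, add_assoc, ← C_add]

theorem eval_zero_appell (a : ℕ → R) (n : ℕ) : (appell a n).eval 0 = a n := by
  rw [← umbral_X_add_C_pow, C_0, add_zero, umbral_X_pow]

end CommSemiring

theorem eval_neg_appell_of_eval_appell [CommRing R] {a c : ℕ → R} {y : R} {n : ℕ}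
    (h : ∀ m ≤ n, (appell a m).eval y = c m) : (appell c n).eval (-y) = a n := by
  rw [← appell_congr h, eval_appell_eval_appell, add_neg_cancel, eval_zero_appell]

end Appell

theorem eq_of_continuous_of_finite_range {M Y : Type*} [TopologicalSpace M] [PreconnectedSpace M]
    [TopologicalSpace Y] [T1Space Y] {f : M → Y} (hf : Continuous f) (hfin : (Set.range f).Finite)
    (p q : M) : f p = f q := by
  have hsub : (Set.range f).Subsingleton := by
    rw [← Set.not_nontrivial_iff]
    exact fun h => (isPreconnected_range hf).infinite_of_nontrivial h hfin
  exact hsub (Set.mem_range_self p) (Set.mem_range_self q)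

/-- The unknowns of the trace system rescaled so that its left-hand side is a binomial transform:
`D / 2`, then `i! * X i` for `1 ≤ i ≤ k`, then zeros. -/
noncomputable def traceMoment (k : ℕ) (D : ℝ) (X : ℕ → ℝ) (i : ℕ) : ℝ :=
  if i = 0 then D / 2 else if i ≤ k then i.factorial * X i else 0

section traceMoment

variable (k : ℕ) (D : ℝ) (X : ℕ → ℝ)

theorem traceMoment_zero : traceMoment k D X 0 = D / 2 := if_pos rfl

variable {k}

theorem traceMoment_of_mem {i : ℕ} (hi : i ∈ Finset.Icc 1 k) :
    traceMoment k D X i = i.factorial * X i := by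
  rw [Finset.mem_Icc] at hi
  rw [traceMoment, if_neg (by omega), if_pos hi.2]

theorem traceMoment_of_lt {i : ℕ} (hi : k < i) : traceMoment k D X i = 0 := by
  rw [traceMoment, if_neg (by omega), if_neg hi.not_ge]

theorem eval_appell_traceMoment (y : ℝ) (n : ℕ) :
    (appell (traceMoment k D X) n).eval y =
      D / 2 * y ^ n +
        ∑ i ∈ Finset.Icc 1 k, (n.descFactorial i : ℝ) * y ^ (n - i) * X i := by
  rw [eval_appell, Finset.range_eq_Ico, Finset.sum_eq_sum_Ico_succ_bot n.succ_pos]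
  congr 1
  · simp [traceMoment_zero]
  refine Finset.sum_congr_of_eq_on_inter (fun i hi hik => ?_) (fun i hi hin => ?_)
    (fun i _ hi => ?_)
  · rw [Finset.mem_Ico] at hi
    rw [Finset.mem_Icc] at hik
    rw [traceMoment_of_lt D X (by omega), mul_zero, zero_mul]
  · rw [Finset.mem_Icc] at hi
    rw [Finset.mem_Ico] at hin
    rw [Nat.descFactorial_of_lt (by omega), Nat.cast_zero, zero_mul, zero_mul]
  · rw [traceMoment_of_mem D X hi, Nat.descFactorial_eq_factorial_mul_choose]
    push_cast
    ring

end traceMoment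

namespace TraceSystem

open Polynomial

variable {k : ℕ} {D y : ℝ} {c X X' : ℕ → ℝ}

theorem eval_neg_appell (h : TraceSystem k D c y X) {n : ℕ} (hn : n ≤ k + 1) :
    (appell (Function.update c 0 (D / 2)) n).eval (-y) = traceMoment k D X n := by
  refine eval_neg_appell_of_eval_appell fun m hm => ?_
  rcases Nat.eq_zero_or_pos m with rfl | hm0
  · rw [appell_zero, eval_C, traceMoment_zero, Function.update_self]
  · rw [Function.update_of_ne hm0.ne', eval_appell_traceMoment]
    exact h m (Finset.mem_Icc.mpr ⟨hm0, hm.trans hn⟩)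

theorem eq_of_mem_Icc (h : TraceSystem k D c y X) (h' : TraceSystem k D c y X') {i : ℕ}
    (hi : i ∈ Finset.Icc 1 k) : X i = X' i := by
  have hik : i ≤ k + 1 := (Finset.mem_Icc.mp hi).2.trans k.le_succ
  have hmoment : traceMoment k D X i = traceMoment k D X' i :=
    (h.eval_neg_appell hik).symm.trans (h'.eval_neg_appell hik)
  rw [traceMoment_of_mem D X hi, traceMoment_of_mem D X' hi] at hmoment
  exact mul_left_cancel₀ (Nat.cast_ne_zero.mpr i.factorial_ne_zero) hmoment

theorem finite_solutions (k : ℕ) {D : ℝ} (hD : D ≠ 0) (c : ℕ → ℝ) :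
    {y | ∃ X, TraceSystem k D c y X}.Finite := by
  set p : ℝ[X] := appell (Function.update c 0 (D / 2)) (k + 1)
  have hcoeff : p.coeff (k + 1) = D / 2 := by rw [coeff_appell_self, Function.update_self]
  have hp : p ≠ 0 := fun h0 => div_ne_zero hD two_ne_zero (by rw [← hcoeff, h0, coeff_zero])
  refine ((finite_setOfPred_isRoot hp).preimage neg_injective.injOn).subset ?_
  rintro y ⟨X, h⟩
  exact (h.eval_neg_appell le_rfl).trans (traceMoment_of_lt D X k.lt_succ_self)

end TraceSystem

/-- If `M` is preconnected, `I : M → ℝ` is continuous and, at every point of `M`, the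
values `I p, X_1 p, …, X_k p` satisfy the trace system with the fixed constants
`c_1, …, c_{k+1}` (and `D ≠ 0`), then `I` is constant on `M` and each `X_i`
(`1 ≤ i ≤ k`) is constant on `M`. -/
theorem trace_system_const {M : Type*} [TopologicalSpace M] [PreconnectedSpace M]
    (k : ℕ) (D : ℝ) (hD : D ≠ 0) (c : ℕ → ℝ)
    (I : M → ℝ) (hI : Continuous I) (X : ℕ → M → ℝ)
    (hsys : ∀ p : M, TraceSystem k D c (I p) (fun i => X i p)) :
    (∃ a : ℝ, ∀ p : M, I p = a) ∧
      ∀ i ∈ Finset.Icc 1 k, ∃ b : ℝ, ∀ p : M, X i p = b := by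
  have hfin : (Set.range I).Finite :=
    (TraceSystem.finite_solutions k hD c).subset
      (Set.range_subset_iff.mpr fun p => ⟨fun i => X i p, hsys p⟩)
  have hI_eq : ∀ p q, I p = I q := eq_of_continuous_of_finite_range hI hfin
  have hX_eq : ∀ i ∈ Finset.Icc 1 k, ∀ p q, X i p = X i q := fun i hi p q =>
    (hsys p).eq_of_mem_Icc (hI_eq p q ▸ hsys q) hi
  rcases isEmpty_or_nonempty M with hM | ⟨⟨q⟩⟩
  · exact ⟨⟨0, isEmptyElim⟩, fun _ _ => ⟨0, isEmptyElim⟩⟩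
  · exact ⟨⟨I q, fun p => hI_eq p q⟩, fun i hi => ⟨X i q, fun p => hX_eq i hi p q⟩⟩
end

section
/- Let A be a commutative ℝ-algebra, D : A → A an ℝ-linear derivation, δ : A → A an ℝ-linear map, and L ∈ A an element with D L = 0, such that the commutation relation δ(D x) − D(δ x) = L · (D x) holds for all x ∈ A. Then for every natural number m and every η ∈ A, D^m(η) = 0 implies D^m(δ η) = 0. -/
/-!
By the Leibniz rule, `D L = 0` says that multiplication by `L` commutes with `D`. In the ring of
endomorphisms the relation `δ D = D δ + L D` then iterates to `δ D^m = D^m δ + m L D^m`, so `D^m δ`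
vanishes on `ker D^m`.
-/

theorem mul_pow_eq_pow_mul_add_nsmul_of_commute {R : Type*} [Semiring R] {a b c : R}
    (hab : a * b = b * a + c * b) (hcb : Commute c b) (m : ℕ) :
    a * b ^ m = b ^ m * a + m • (c * b ^ m) := by
  induction m with
  | zero => simp
  | succ m ih =>
    calc a * b ^ (m + 1) = (b ^ m * a + m • (c * b ^ m)) * b := by
          rw [pow_succ, ← mul_assoc, ih]
      _ = b ^ m * (b * a + c * b) + m • (c * b ^ (m + 1)) := by
          rw [add_mul, mul_assoc, hab, smul_mul_assoc, mul_assoc, ← pow_succ]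
      _ = b ^ (m + 1) * a + c * b ^ (m + 1) + m • (c * b ^ (m + 1)) := by
          rw [mul_add, ← mul_assoc, ← mul_assoc, ← (hcb.pow_right m).eq, mul_assoc c, ← pow_succ]
      _ = b ^ (m + 1) * a + (m + 1) • (c * b ^ (m + 1)) := by
          rw [add_assoc, succ_nsmul']

theorem commute_mulLeft_derivation_of_apply_eq_zero {R A : Type*} [CommSemiring R]
    [CommSemiring A] [Algebra R A] {D : Derivation R A A} {L : A} (hL : D L = 0) :
    Commute (LinearMap.mulLeft R L) (D : Module.End R A) :=
  LinearMap.ext fun x => by simp [hL]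

theorem iterate_derivation_commutator_general {R M : Type*} [Semiring R] [AddCommMonoid M]
    [Module R M] {D δ N : Module.End R M} (hND : Commute N D)
    (hcomm : ∀ x : M, δ (D x) = D (δ x) + N (D x)) (m : ℕ) (η : M) (hη : D^[m] η = 0) :
    D^[m] (δ η) = 0 := by
  have hδD : δ * D ^ m = D ^ m * δ + m • (N * D ^ m) :=
    mul_pow_eq_pow_mul_add_nsmul_of_commute (LinearMap.ext hcomm) hND m
  rw [← Module.End.pow_apply] at hη ⊢
  simpa [hη] using (LinearMap.congr_fun hδD η).symm

/-- The commutator step in the proof of Lemma 2 (lem_1bal_coef) of the paper: let `D` be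
a derivation on a commutative `ℝ`-algebra `A`, `δ : A → A` an `ℝ`-linear map and `L ∈ A`
with `D L = 0`, satisfying the commutation relation `δ(D x) − D(δ x) = L · D x` for all
`x`. Then for every `m` and every `η ∈ A`, `D^m(η) = 0` implies `D^m(δ η) = 0`. -/
theorem iterate_derivation_commutator {A : Type*} [CommRing A] [Algebra ℝ A]
    (D : Derivation ℝ A A) (δ : A →ₗ[ℝ] A) (L : A)
    (hL : D L = 0) (hcomm : ∀ x : A, δ (D x) - D (δ x) = L * D x) :
    ∀ (m : ℕ) (η : A), (⇑D)^[m] η = 0 → (⇑D)^[m] (δ η) = 0 :=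
  iterate_derivation_commutator_general (commute_mulLeft_derivation_of_apply_eq_zero hL)
    fun x => sub_eq_iff_eq_add'.mp (hcomm x)
end

section
/- Let V be a real vector space, B : V × V → ℝ a symmetric bilinear form, d ≥ 1, and ℓ, n ∈ V, m_1, …, m_d ∈ V a null frame: B(ℓ,ℓ) = B(n,n) = 0, B(ℓ,n) = 1, B(m_i,m_j) = δ_{ij}, B(ℓ,m_i) = B(n,m_i) = 0. Let Ω be a symmetric d × d real matrix with Σ_i Ω_{ii} = 0, and let C : V^4 → ℝ be the type N quadrilinear form C = 4 Σ_{i,j} Ω_{ij} · T^{(ij)}_{{abcd}}, where T^{(ij)}(x,y,z,w) = B(ℓ,x)·B(m_i,y)·B(ℓ,z)·B(m_j,w) and {abcd} denotes the symmetrization T_{{abcd}} = ½(T_{[ab][cd]} + T_{[cd][ab]}). Then: (i) for all x, y ∈ V the rank-2 frame contraction of C with itself over the last three slots vanishes, i.e. Σ C(x,a,b,c)·C(y,a*,b*,c*) = 0, where each contracted pair (a,a*), (b,b*), (c,c*) ranges independently over (ℓ,n), (n,ℓ), (m_1,m_1), …, (m_d,m_d); and (ii) the full frame contraction Σ C(a,b,c,e)·C(a*,b*,c*,e*)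 over all four slot pairs vanishes. -/
/-- Antisymmetrization `T_{[ab][cd]}` of a quadrilinear form over the two pairs of
arguments, each antisymmetrization carrying a factor `½`. -/
noncomputable def pairAntisym {V : Type*} (T : V → V → V → V → ℝ) : V → V → V → V → ℝ :=
  fun x y z w => (T x y z w - T y x z w - T x y w z + T y x w z) / 4

/-- The Weyl-type symmetrization `T_{{abcd}} = ½(T_{[ab][cd]} + T_{[cd][ab]})`. -/
noncomputable def weylSym {V : Type*} (T : V → V → V → V → ℝ) : V → V → V → V → ℝ :=
  fun x y z w => (pairAntisym T x y z w + pairAntisym T z w x y) / 2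

/-- The frame contraction of a pair of slots: the contracted pair `(a, a*)` ranges over
`(ℓ, n)`, `(n, ℓ)`, `(m_1, m_1)`, …, `(m_d, m_d)`, implementing index raising with the
inverse metric `g^{ab} = 2 ℓ^{(a} n^{b)} + Σ_i m_i^a m_i^b`. -/
noncomputable def contractPair {V : Type*} (d : ℕ) (ℓ n : V) (m : Fin d → V)
    (F : V → V → ℝ) : ℝ :=
  F ℓ n + F n ℓ + ∑ i, F (m i) (m i)

/-!
The bivectors `ℓ ∧ m_i` vanish on every pair of vectors from `{ℓ, m_1, …, m_d}`, and also as soon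
as one argument is `ℓ`. A type N Weyl form is a combination of products of two such bivectors, one
in each pair of slots, so it vanishes as soon as `ℓ` enters one of its last two slots, and also when
both of these hold vectors `m_k`. In a product of two such forms contracted over the last two slots,
each `n` in one factor faces an `ℓ` in the other, and the terms without `n` hold only `m_k`.
-/

section Contraction

variable {V : Type*} (d : ℕ) (ℓ n : V) (m : Fin d → V)

theorem contractPair_zero : contractPair d ℓ n m (fun _ _ => 0) = 0 := by
  simp [contractPair]

theorem contractPair_eq_sum {F : V → V → ℝ} (hleft : ∀ v, F ℓ v = 0) (hright : ∀ v, F v ℓ = 0) :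
    contractPair d ℓ n m F = ∑ k, F (m k) (m k) := by
  simp [contractPair, hleft, hright]

theorem contractPair_contractPair_mul_eq_zero {F G : V → V → ℝ}
    (hF₁ : ∀ v, F ℓ v = 0) (hF₂ : ∀ v, F v ℓ = 0) (hFm : ∀ k l, F (m k) (m l) = 0)
    (hG₁ : ∀ v, G ℓ v = 0) (hG₂ : ∀ v, G v ℓ = 0) :
    contractPair d ℓ n m (fun c c' =>
      contractPair d ℓ n m (fun e e' => F c e * G c' e')) = 0 := by
  have inner (c c' : V) : contractPair d ℓ n m (fun e e' => F c e * G c' e') =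
      ∑ l, F c (m l) * G c' (m l) :=
    contractPair_eq_sum d ℓ n m (by simp [hF₂]) (by simp [hG₂])
  simp only [inner]
  rw [contractPair_eq_sum d ℓ n m (by simp [hF₁]) (by simp [hG₁])]
  simp [hFm]

end Contraction

/-- The bivector `φ ∧ ψ` of two covectors, without a factor `½`. Covectors are encoded as
functions, like the tensors in `weylSym`; no linearity is imposed. -/
def covectorWedge {V : Type*} (φ ψ : V → ℝ) (x y : V) : ℝ :=
  φ x * ψ y - φ y * ψ x

theorem pairAntisym_mul {V : Type*} (φ ψ χ ω : V → ℝ) (x y z w : V) :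
    pairAntisym (fun a b c e => φ a * ψ b * χ c * ω e) x y z w =
      covectorWedge φ ψ x y * covectorWedge χ ω z w / 4 := by
  simp only [pairAntisym, covectorWedge]
  ring

theorem weylSym_mul {V : Type*} (φ ψ χ ω : V → ℝ) (x y z w : V) :
    weylSym (fun a b c e => φ a * ψ b * χ c * ω e) x y z w =
      (covectorWedge φ ψ x y * covectorWedge χ ω z w +
        covectorWedge φ ψ z w * covectorWedge χ ω x y) / 8 := by
  simp only [weylSym, pairAntisym_mul]
  ring

/-- The type N form `C_{abcd} = 4 Ω_{ij} φ_{{a} μ^{(i)}_b φ_c μ^{(j)}_{d}}`, where `φ` stands for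
`ℓ_a` and `μ i` for `m^{(i)}_a`; the metric enters only through these covectors. -/
noncomputable def typeNWeyl {V ι : Type*} [Fintype ι] (φ : V → ℝ) (μ : ι → V → ℝ)
    (Ω : Matrix ι ι ℝ) : V → V → V → V → ℝ :=
  fun x y z w => 4 * ∑ i, ∑ j, Ω i j *
    weylSym (fun a b c e => φ a * μ i b * φ c * μ j e) x y z w

namespace typeNWeyl

variable {V ι : Type*} [Fintype ι] {φ : V → ℝ} {μ : ι → V → ℝ}

theorem eq_zero_of_covectorWedge_eq_zero (Ω : Matrix ι ι ℝ) (x y : V) {z w : V}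
    (h : ∀ i, covectorWedge φ (μ i) z w = 0) : typeNWeyl φ μ Ω x y z w = 0 := by
  simp [typeNWeyl, weylSym_mul, h]

theorem contractPair_last_two_eq_zero {d : ℕ} {ℓ : V} (n : V) {m : Fin d → V}
    (hφℓ : φ ℓ = 0) (hφm : ∀ k, φ (m k) = 0) (hμℓ : ∀ i, μ i ℓ = 0)
    (Ω Ω' : Matrix ι ι ℝ) (x y x' y' : V) :
    contractPair d ℓ n m (fun c c' => contractPair d ℓ n m (fun e e' =>
      typeNWeyl φ μ Ω x y c e * typeNWeyl φ μ Ω' x' y' c' e')) = 0 := by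
  have third (Θ : Matrix ι ι ℝ) (u v w : V) : typeNWeyl φ μ Θ u v ℓ w = 0 :=
    eq_zero_of_covectorWedge_eq_zero Θ u v fun i => by simp [covectorWedge, hφℓ, hμℓ]
  have fourth (Θ : Matrix ι ι ℝ) (u v z : V) : typeNWeyl φ μ Θ u v z ℓ = 0 :=
    eq_zero_of_covectorWedge_eq_zero Θ u v fun i => by simp [covectorWedge, hφℓ, hμℓ]
  have transverse (k l : Fin d) : typeNWeyl φ μ Ω x y (m k) (m l) = 0 :=
    eq_zero_of_covectorWedge_eq_zero Ω x y fun i => by simp [covectorWedge, hφm]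
  exact contractPair_contractPair_mul_eq_zero d ℓ n m (third Ω x y) (fourth Ω x y) transverse
    (third Ω' x' y') (fourth Ω' x' y')

end typeNWeyl

theorem typeN_weyl_contractions_vanish_general {V ι : Type*} [Fintype ι]
    {φ : V → ℝ} {μ : ι → V → ℝ} {d : ℕ} {ℓ : V} (n : V) {m : Fin d → V}
    (hφℓ : φ ℓ = 0) (hφm : ∀ k, φ (m k) = 0) (hμℓ : ∀ i, μ i ℓ = 0) (Ω Ω' : Matrix ι ι ℝ) :
    (∀ x y : V,
      contractPair d ℓ n m (fun a a' =>
        contractPair d ℓ n m (fun b b' =>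
          contractPair d ℓ n m (fun c c' =>
            typeNWeyl φ μ Ω x a b c * typeNWeyl φ μ Ω' y a' b' c'))) = 0) ∧
    contractPair d ℓ n m (fun a a' =>
      contractPair d ℓ n m (fun b b' =>
        contractPair d ℓ n m (fun c c' =>
          contractPair d ℓ n m (fun e e' =>
            typeNWeyl φ μ Ω a b c e * typeNWeyl φ μ Ω' a' b' c' e')))) = 0 := by
  simp only [typeNWeyl.contractPair_last_two_eq_zero n hφℓ hφm hμℓ, contractPair_zero,
    implies_true, and_self]

/-- For the type N Weyl form (typeNWeyl) of the paper, both quadratic frame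
contractions vanish: (i) `C_{acde} C_b{}^{cde} = 0` and (ii) `C_{cdef} C^{cdef} = 0`. -/
theorem typeN_weyl_contractions_vanish {V : Type*} [AddCommGroup V] [Module ℝ V]
    (B : V →ₗ[ℝ] V →ₗ[ℝ] ℝ) (hBsymm : ∀ x y : V, B x y = B y x)
    (d : ℕ) (hd : 1 ≤ d) (ℓ n : V) (m : Fin d → V)
    (hll : B ℓ ℓ = 0) (hnn : B n n = 0) (hln : B ℓ n = 1)
    (hmm : ∀ i j, B (m i) (m j) = if i = j then (1 : ℝ) else 0)
    (hlm : ∀ i, B ℓ (m i) = 0) (hnm : ∀ i, B n (m i) = 0)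
    (Ω : Matrix (Fin d) (Fin d) ℝ) (hΩsymm : ∀ i j, Ω i j = Ω j i)
    (hΩtr : ∑ i, Ω i i = 0)
    (C : V → V → V → V → ℝ)
    (hC : C = fun x y z w => 4 * ∑ i, ∑ j, Ω i j *
        weylSym (fun a b c e => B ℓ a * B (m i) b * B ℓ c * B (m j) e) x y z w) :
    (∀ x y : V,
      contractPair d ℓ n m (fun a a' =>
        contractPair d ℓ n m (fun b b' =>
          contractPair d ℓ n m (fun c c' =>
            C x a b c * C y a' b' c'))) = 0) ∧
    contractPair d ℓ n m (fun a a' =>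
      contractPair d ℓ n m (fun b b' =>
        contractPair d ℓ n m (fun c c' =>
          contractPair d ℓ n m (fun e e' =>
            C a b c e * C a' b' c' e')))) = 0 := by
  subst hC
  exact typeN_weyl_contractions_vanish_general n hll hlm
    (fun i => (hBsymm (m i) ℓ).trans (hlm i)) Ω Ω
end

section
/- Let V be a real vector space, B : V × V → ℝ a symmetric bilinear form, d ≥ 1, and ℓ, n ∈ V, m_1, …, m_d ∈ V a null frame: B(ℓ,ℓ) = B(n,n) = 0, B(ℓ,n) = 1, B(m_i,m_j) = δ_{ij}, B(ℓ,m_i) = B(n,m_i) = 0. Let Ψ'_{ijk} be real numbers with Ψ'_{ijk} = −Ψ'_{ikj}, set Ψ'_i = Σ_j Ψ'_{jij}, and let Ω' be a symmetric d × d real matrix with Σ_i Ω'_{ii} = 0. Let C : V^4 → ℝ be the type III quadrilinear form C = 8 Σ_i Ψ'_i · U^{(i)}_{{abcd}} + 4 Σ_{i,j,k} Ψ'_{ijk} · W^{(ijk)}_{{abcd}} + 4 Σ_{i,j} Ω'_{ij} · T^{(ij)}_{{abcd}}, where U^{(i)}(x,y,z,w) = B(ℓ,x)B(n,y)B(ℓ,z)B(m_i,w),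 W^{(ijk)}(x,y,z,w) = B(ℓ,x)B(m_i,y)B(m_j,z)B(m_k,w), T^{(ij)}(x,y,z,w) = B(ℓ,x)B(m_i,y)B(ℓ,z)B(m_j,w), and {abcd} denotes the symmetrization T_{{abcd}} = ½(T_{[ab][cd]} + T_{[cd][ab]}). Then C is traceless: for all x, y ∈ V, C(ℓ,x,n,y) + C(n,x,ℓ,y) + Σ_{i=1}^{d} C(m_i,x,m_i,y) = 0. -/
/-!
For one-forms `f, g, h, k`, the Weyl symmetrization of `f ⊗ g ⊗ h ⊗ k` has a trace over the first
and third slots which is one eighth of a signed sum of four terms: the inverse metric pairs one of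
`f, g` with one of `h, k`, and the other two form a symmetrized product. On the one-forms dual to
the frame the inverse metric gives back the metric, so most terms vanish and the trace of the
type III form is
`Σ_i (Σ_j Ψ'_{jij} - Ψ'_i) (ℓ_b m^{(i)}_d + m^{(i)}_b ℓ_d) + (Σ_i Ω'_{ii}) ℓ_b ℓ_d`.
Evaluating at `(n, m_i)` and `(n, n)` isolates the two coefficients.
-/

section Trace

variable {V ι : Type*} [Fintype ι]

/-- The trace of a two-slot form against `ℓ ⊗ n + n ⊗ ℓ + Σ i, m i ⊗ m i`, which is the inverse
metric when `ℓ, n, m` is a null frame spanning `V`. The form is an arbitrary function, so that the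
trace applies to two chosen slots of a form with more arguments. -/
def nullFrameTrace (ℓ n : V) (m : ι → V) : (V → V → ℝ) →ₗ[ℝ] ℝ where
  toFun T := T ℓ n + T n ℓ + ∑ i, T (m i) (m i)
  map_add' S T := by
    simp only [Pi.add_apply, Finset.sum_add_distrib]
    ring
  map_smul' c T := by
    simp only [Pi.smul_apply, smul_eq_mul, RingHom.id_apply, ← Finset.mul_sum]
    ring

theorem nullFrameTrace_apply (ℓ n : V) (m : ι → V) (T : V → V → ℝ) :
    nullFrameTrace ℓ n m T = T ℓ n + T n ℓ + ∑ i, T (m i) (m i) :=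
  rfl

theorem nullFrameTrace_mul_swap (ℓ n : V) (m : ι → V) (f g : V → ℝ) :
    nullFrameTrace ℓ n m (fun u v => g v * f u) = nullFrameTrace ℓ n m (fun u v => g u * f v) := by
  simp only [nullFrameTrace_apply]
  ring

/-- The symmetrized product `f ⊗ g + g ⊗ f` of two one-forms, without a factor `½`. -/
def symProd (f g : V → ℝ) (x y : V) : ℝ :=
  f x * g y + g x * f y

theorem nullFrameTrace_weylSym_mul (ℓ n : V) (m : ι → V) (f g h k : V → ℝ) (x y : V) :
    nullFrameTrace ℓ n m
        (fun u v => weylSym (fun a b c e => f a * g b * h c * k e) u x v y) =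
      (nullFrameTrace ℓ n m (fun u v => f u * h v) * symProd g k x y
        - nullFrameTrace ℓ n m (fun u v => g u * h v) * symProd f k x y
        - nullFrameTrace ℓ n m (fun u v => f u * k v) * symProd g h x y
        + nullFrameTrace ℓ n m (fun u v => g u * k v) * symProd f h x y) / 8 := by
  have expand : (fun u v => weylSym (fun a b c e => f a * g b * h c * k e) u x v y) =
      (1 / 8 : ℝ) •
        ((g x * k y) • (fun u v => f u * h v) + (g y * k x) • (fun u v => f v * h u)
        - ((f x * k y) • (fun u v => g u * h v) + (f y * k x) • (fun u v => g v * h u))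
        - ((g x * h y) • (fun u v => f u * k v) + (g y * h x) • (fun u v => f v * k u))
        + ((f x * h y) • (fun u v => g u * k v) + (f y * h x) • (fun u v => g v * k u))) := by
    ext u v
    simp only [weylSym, pairAntisym, Pi.smul_apply, Pi.add_apply, Pi.sub_apply, smul_eq_mul]
    ring
  simp only [expand, map_smul, map_add, map_sub, nullFrameTrace_mul_swap, smul_eq_mul, symProd]
  ring

end Trace

section Contraction

variable {R ι : Type*} [CommRing R] [Fintype ι] [DecidableEq ι]

theorem sum_mul_ite_sub_ite_of_antisymm {Ψ : ι → ι → ι → R} (hΨ : ∀ i j k, Ψ i j k = -Ψ i k j)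
    (G : ι → R) :
    ∑ i, ∑ j, ∑ k, Ψ i j k * ((if i = k then G j else 0) - if i = j then G k else 0) =
      2 * ∑ i, (∑ j, Ψ j i j) * G i := by
  have contract_outer : ∑ i, ∑ j, Ψ i j i * G j = ∑ i, (∑ j, Ψ j i j) * G i := by
    rw [Finset.sum_comm]
    simp only [Finset.sum_mul]
  have contract_left : ∑ i, ∑ k, Ψ i i k * G k = -∑ i, ∑ k, Ψ i k i * G k := by
    simp only [fun i k => hΨ i i k, neg_mul, Finset.sum_neg_distrib]
  calc ∑ i, ∑ j, ∑ k, Ψ i j k * ((if i = k then G j else 0) - if i = j then G k else 0)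
      = ∑ i, ∑ j, Ψ i j i * G j - ∑ i, ∑ k, Ψ i i k * G k := by
        simp [mul_sub, Finset.sum_sub_distrib, Finset.sum_ite_irrel]
    _ = 2 * ∑ i, (∑ j, Ψ j i j) * G i := by
        rw [contract_left, contract_outer]
        ring

end Contraction

section NullFrame

variable {V ι : Type*} [AddCommGroup V] [Module ℝ V] [DecidableEq ι]

/-- A null frame of the metric `B`: two null vectors `ℓ, n` with `B ℓ n = 1` and orthonormal
vectors `m i` orthogonal to both. It is not required to span `V`. -/
structure IsNullFrame (B : V →ₗ[ℝ] V →ₗ[ℝ] ℝ) (ℓ n : V) (m : ι → V) : Prop where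
  ll : B ℓ ℓ = 0
  nn : B n n = 0
  ln : B ℓ n = 1
  mm : ∀ i j, B (m i) (m j) = if i = j then 1 else 0
  lm : ∀ i, B ℓ (m i) = 0
  nm : ∀ i, B n (m i) = 0

variable [Fintype ι]

/-- The type III Weyl form with boost-weight `-1` components `Ψ₁` and `Ψ` and boost-weight `-2`
components `Ω`. The vector `Ψ₁` is independent of `Ψ` here; in the paper it is the contraction
`Σ j, Ψ j i j`. -/
noncomputable def typeIIIWeyl (B : V →ₗ[ℝ] V →ₗ[ℝ] ℝ) (ℓ n : V) (m : ι → V) (Ψ₁ : ι → ℝ)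
    (Ψ : ι → ι → ι → ℝ) (Ω : Matrix ι ι ℝ) : V → V → V → V → ℝ :=
  fun x y z w =>
    8 * ∑ i, Ψ₁ i * weylSym (fun a b c e => B ℓ a * B n b * B ℓ c * B (m i) e) x y z w
    + 4 * ∑ i, ∑ j, ∑ k, Ψ i j k *
      weylSym (fun a b c e => B ℓ a * B (m i) b * B (m j) c * B (m k) e) x y z w
    + 4 * ∑ i, ∑ j, Ω i j *
      weylSym (fun a b c e => B ℓ a * B (m i) b * B ℓ c * B (m j) e) x y z w

namespace IsNullFrame

variable {B : V →ₗ[ℝ] V →ₗ[ℝ] ℝ} {ℓ n : V} {m : ι → V}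

theorem nullFrameTrace_mul_l (hF : IsNullFrame B ℓ n m) (p : V) :
    nullFrameTrace ℓ n m (fun u v => B p u * B ℓ v) = B p ℓ := by
  simp [nullFrameTrace_apply, hF.ll, hF.ln, hF.lm]

theorem nullFrameTrace_mul_m (hF : IsNullFrame B ℓ n m) (hB : ∀ x y, B x y = B y x)
    (p : V) (i : ι) :
    nullFrameTrace ℓ n m (fun u v => B p u * B (m i) v) = B p (m i) := by
  simp [nullFrameTrace_apply, hB (m i) ℓ, hB (m i) n, hF.lm, hF.nm, hF.mm]

theorem nullFrameTrace_weylSym_lnlm (hF : IsNullFrame B ℓ n m) (hB : ∀ x y, B x y = B y x)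
    (i : ι) (x y : V) :
    nullFrameTrace ℓ n m
        (fun u v => weylSym (fun a b c e => B ℓ a * B n b * B ℓ c * B (m i) e) u x v y) =
      -symProd (B ℓ) (B (m i)) x y / 8 := by
  rw [nullFrameTrace_weylSym_mul]
  simp [hF.nullFrameTrace_mul_l, hF.nullFrameTrace_mul_m hB, hB n ℓ, hF.ll, hF.ln, hF.lm, hF.nm]

theorem nullFrameTrace_weylSym_lmmm (hF : IsNullFrame B ℓ n m) (hB : ∀ x y, B x y = B y x)
    (i j k : ι) (x y : V) :
    nullFrameTrace ℓ n m
        (fun u v => weylSym (fun a b c e => B ℓ a * B (m i) b * B (m j) c * B (m k) e) u x v y) =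
      ((if i = k then symProd (B ℓ) (B (m j)) x y else 0)
        - if i = j then symProd (B ℓ) (B (m k)) x y else 0) / 8 := by
  rw [nullFrameTrace_weylSym_mul]
  simp only [hF.nullFrameTrace_mul_m hB, hF.lm, hF.mm, ite_mul, one_mul, zero_mul]
  ring

theorem nullFrameTrace_weylSym_lmlm (hF : IsNullFrame B ℓ n m) (hB : ∀ x y, B x y = B y x)
    (i j : ι) (x y : V) :
    nullFrameTrace ℓ n m
        (fun u v => weylSym (fun a b c e => B ℓ a * B (m i) b * B ℓ c * B (m j) e) u x v y) =
      if i = j then B ℓ x * B ℓ y / 4 else 0 := by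
  rw [nullFrameTrace_weylSym_mul]
  simp only [hF.nullFrameTrace_mul_l, hF.nullFrameTrace_mul_m hB, hB (m i) ℓ, hF.ll, hF.lm, hF.mm,
    symProd]
  split_ifs <;> ring

theorem nullFrameTrace_typeIIIWeyl (hF : IsNullFrame B ℓ n m) (hB : ∀ x y, B x y = B y x)
    {Ψ : ι → ι → ι → ℝ} (hΨ : ∀ i j k, Ψ i j k = -Ψ i k j) (Ψ₁ : ι → ℝ) (Ω : Matrix ι ι ℝ)
    (x y : V) :
    nullFrameTrace ℓ n m (fun u v => typeIIIWeyl B ℓ n m Ψ₁ Ψ Ω u x v y) =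
      ∑ i, (∑ j, Ψ j i j - Ψ₁ i) * symProd (B ℓ) (B (m i)) x y + Ω.trace * (B ℓ x * B ℓ y) := by
  have expand : (fun u v => typeIIIWeyl B ℓ n m Ψ₁ Ψ Ω u x v y) =
      (8 : ℝ) • ∑ i, Ψ₁ i •
        (fun u v => weylSym (fun a b c e => B ℓ a * B n b * B ℓ c * B (m i) e) u x v y)
      + (4 : ℝ) • ∑ i, ∑ j, ∑ k, Ψ i j k •
        (fun u v => weylSym (fun a b c e => B ℓ a * B (m i) b * B (m j) c * B (m k) e) u x v y)
      + (4 : ℝ) • ∑ i, ∑ j, Ω i j •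
        (fun u v => weylSym (fun a b c e => B ℓ a * B (m i) b * B ℓ c * B (m j) e) u x v y) := by
    ext u v
    simp only [typeIIIWeyl, Pi.add_apply, Pi.smul_apply, Finset.sum_apply, smul_eq_mul]
  have trace_Ω : ∑ i, ∑ j, Ω i j * (if i = j then B ℓ x * B ℓ y / 4 else 0) =
      Ω.trace * (B ℓ x * B ℓ y / 4) := by
    simp [Matrix.trace, Finset.sum_mul]
  simp only [expand, map_add, map_smul, map_sum, smul_eq_mul, hF.nullFrameTrace_weylSym_lnlm hB,
    hF.nullFrameTrace_weylSym_lmmm hB, hF.nullFrameTrace_weylSym_lmlm hB, trace_Ω, ← mul_div_assoc,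
    ← Finset.sum_div, sum_mul_ite_sub_ite_of_antisymm hΨ, sub_mul, mul_neg,
    Finset.sum_sub_distrib, Finset.sum_neg_distrib]
  ring

end IsNullFrame

theorem typeIII_weyl_traceless_general {B : V →ₗ[ℝ] V →ₗ[ℝ] ℝ} (hB : ∀ x y, B x y = B y x)
    {ℓ n : V} {m : ι → V} (hF : IsNullFrame B ℓ n m)
    {Ψ : ι → ι → ι → ℝ} (hΨ : ∀ i j k, Ψ i j k = -Ψ i k j) (Ψ₁ : ι → ℝ) (Ω : Matrix ι ι ℝ) :
    (∀ x y, nullFrameTrace ℓ n m (fun u v => typeIIIWeyl B ℓ n m Ψ₁ Ψ Ω u x v y) = 0) ↔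
      (∀ i, Ψ₁ i = ∑ j, Ψ j i j) ∧ Ω.trace = 0 := by
  simp only [hF.nullFrameTrace_typeIIIWeyl hB hΨ]
  refine ⟨fun h => ⟨fun i => ?_, ?_⟩, fun ⟨hΨ₁, hΩ⟩ x y => ?_⟩
  · have trace_n_m : ∑ j, Ψ j i j - Ψ₁ i = 0 := by
      simpa [symProd, hF.ln, hF.lm, hF.mm, hB _ n, hF.nm] using h n (m i)
    exact (sub_eq_zero.mp trace_n_m).symm
  · simpa [symProd, hF.ln, hB _ n, hF.nm] using h n n
  · simp [hΨ₁, hΩ]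

end NullFrame

/-- Tracelessness of the type III Weyl form (typeIIIWeyl) of the paper: with
`Ψ'_i = Σ_j Ψ'_{jij}`, the form
`C = 8 Σ_i Ψ'_i ℓ_{{a} n_b ℓ_c m^{(i)}_{d}} + 4 Σ_{ijk} Ψ'_{ijk} ℓ_{{a} m^{(i)}_b m^{(j)}_c m^{(k)}_{d}}
 + 4 Σ_{ij} Ω'_{ij} ℓ_{{a} m^{(i)}_b ℓ_c m^{(j)}_{d}}`
is traceless with respect to the inverse-metric contraction over the first and third
slots in a null frame. -/
theorem typeIII_weyl_traceless {V : Type*} [AddCommGroup V] [Module ℝ V]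
    (B : V →ₗ[ℝ] V →ₗ[ℝ] ℝ) (hBsymm : ∀ x y : V, B x y = B y x)
    (d : ℕ) (hd : 1 ≤ d) (ℓ n : V) (m : Fin d → V)
    (hll : B ℓ ℓ = 0) (hnn : B n n = 0) (hln : B ℓ n = 1)
    (hmm : ∀ i j, B (m i) (m j) = if i = j then (1 : ℝ) else 0)
    (hlm : ∀ i, B ℓ (m i) = 0) (hnm : ∀ i, B n (m i) = 0)
    (Ψ : Fin d → Fin d → Fin d → ℝ)
    (hΨanti : ∀ i j k, Ψ i j k = -Ψ i k j)
    (Ψ₁ : Fin d → ℝ) (hΨ₁ : ∀ i, Ψ₁ i = ∑ j, Ψ j i j)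
    (Ω : Matrix (Fin d) (Fin d) ℝ) (hΩsymm : ∀ i j, Ω i j = Ω j i)
    (hΩtr : ∑ i, Ω i i = 0)
    (C : V → V → V → V → ℝ)
    (hC : C = fun x y z w =>
        8 * ∑ i, Ψ₁ i *
          weylSym (fun a b c e => B ℓ a * B n b * B ℓ c * B (m i) e) x y z w
      + 4 * ∑ i, ∑ j, ∑ k, Ψ i j k *
          weylSym (fun a b c e => B ℓ a * B (m i) b * B (m j) c * B (m k) e) x y z w
      + 4 * ∑ i, ∑ j, Ω i j *
          weylSym (fun a b c e => B ℓ a * B (m i) b * B ℓ c * B (m j) e) x y z w) :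
    ∀ x y : V, C ℓ x n y + C n x ℓ y + ∑ i, C (m i) x (m i) y = 0 := by
  subst hC
  have hF : IsNullFrame B ℓ n m := ⟨hll, hnn, hln, hmm, hlm, hnm⟩
  exact (typeIII_weyl_traceless_general hBsymm hF hΨanti Ψ₁ Ω).mpr ⟨hΨ₁, hΩtr⟩
end
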